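/- Let (X,d) be a metric space, let e : X → E be an injective hull of X, and let S ⊆ P₁(X) be a subset such that δ_x ∈ S for all x ∈ X. If β : S → X is a map that is 1-Lipschitz with respect to W₁ and satisfies β(δ_x) = x for all x ∈ X, then there exists a contracting barycenter map β̄ : P₁(E) → E such that e(β(s)) = β̄(e_♯ s) for all s ∈ S. -/

import Mathlib

universe u

open scoped ENNReal
open MeasureTheory

/-- A metric space `Y` is injective if every `1`-Lipschitz map into `Y` defined on a subset
of a metric space `B` extends to a `1`-Lipschitz map on all of `B`. -/
def IsInjectiveMetricSpace (Y : Type u) [MetricSpace Y] : Prop :=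
  ∀ (B : Type u) [MetricSpace B] (A : Set B) (f : A → Y),
    LipschitzWith 1 f → ∃ g : B → Y, LipschitzWith 1 g ∧ ∀ a : A, g ↑a = f a

/-- An isometric embedding `e : X → E` into an injective metric space `E` is an injective hull
if every `1`-Lipschitz map `f : E → Z` such that `f ∘ e` is an isometric embedding is itself
an isometric embedding. -/
def IsInjectiveHull {X : Type u} {E : Type u} [MetricSpace X] [MetricSpace E] (e : X → E) :
    Prop :=
  Isometry e ∧ IsInjectiveMetricSpace E ∧
    ∀ (Z : Type u) [MetricSpace Z] (f : E → Z),
      LipschitzWith 1 f → Isometry (f ∘ e) → Isometry f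

/-- The first Wasserstein distance between two (probability) measures: the infimum of
`∫ d(x,y) dγ` over all couplings `γ` of the pair, i.e. probability measures on `X × X`
with first marginal `μ` and second marginal `ν`. -/
noncomputable def W1 {X : Type*} [MetricSpace X] [MeasurableSpace X]
    (μ ν : MeasureTheory.Measure X) : ℝ≥0∞ :=
  ⨅ (γ : MeasureTheory.Measure (X × X)) (_ : MeasureTheory.IsProbabilityMeasure γ ∧
      γ.map Prod.fst = μ ∧ γ.map Prod.snd = ν),
    ∫⁻ p, edist p.1 p.2 ∂γ

/-- Membership in `P₁(X)`: a Radon probability measure with finite first moment. -/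
def MemP1 {X : Type*} [MetricSpace X] [MeasurableSpace X]
    (μ : MeasureTheory.Measure X) : Prop :=
  MeasureTheory.IsProbabilityMeasure μ ∧ μ.InnerRegular ∧
    ∀ x₀ : X, (∫⁻ x, edist x x₀ ∂μ) ≠ ⊤

/-- `P₁(X)`: the space of Radon probability measures on `X` with finite first moment. -/
abbrev P1 (X : Type*) [MetricSpace X] [MeasurableSpace X] : Type _ :=
  {μ : MeasureTheory.Measure X // MemP1 μ}

/-- A contracting barycenter map: a `1`-Lipschitz map `β : P₁(X) → X` (with respect to the
first Wasserstein distance) such that `β δ_x = x` for every `x`. -/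
def IsContractingBarycenter {X : Type*} [MetricSpace X] [MeasurableSpace X]
    (β : P1 X → X) : Prop :=
  (∀ μ ν : P1 X, edist (β μ) (β ν) ≤ W1 μ.1 ν.1) ∧
    ∀ (x : X) (μ : P1 X), μ.1 = MeasureTheory.Measure.dirac x → β μ = x

/-- A measure in `P₁` is concentrated on a `σ`-compact set. -/
lemma MemP1.exists_isSigmaCompact {X : Type*} [MetricSpace X] [MeasurableSpace X] [BorelSpace X]
    {μ : Measure X} (h : MemP1 μ) : ∃ C : Set X, IsSigmaCompact C ∧ ∀ᵐ x ∂μ, x ∈ C := by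
  have := h.1
  have := h.2.1
  have key : ∀ n : ℕ, ∃ K : Set X, IsCompact K ∧ μ Kᶜ ≤ (n + 1 : ℝ≥0∞)⁻¹ := by
    intro n
    obtain ⟨K, -, hKc, hK⟩ := MeasurableSet.univ.exists_isCompact_sdiff_lt (μ := μ)
      (measure_ne_top μ _) (ε := (n + 1 : ℝ≥0∞)⁻¹) (by simp)
    exact ⟨K, hKc, by rw [Set.compl_eq_univ_sdiff]; exact hK.le⟩
  choose K hKc hK using key
  refine ⟨⋃ n, K n, isSigmaCompact_iUnion_of_isCompact _ hKc, ?_⟩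
  rw [ae_iff]
  refine le_antisymm (ge_of_tendsto' (x := Filter.atTop)
    (f := fun n : ℕ => ((n : ℝ≥0∞) + 1)⁻¹) ?_ fun n => ?_) bot_le
  · have := (Filter.tendsto_add_atTop_iff_nat 1).2 ENNReal.tendsto_inv_nat_nhds_zero
    simpa using this
  · exact (measure_mono (Set.compl_subset_compl.2 (Set.subset_iUnion K n))).trans (hK n)

/-- A measure in `P₁` is concentrated on the closure of a sequence. -/
lemma MemP1.exists_ae_mem_closure_range {X : Type*} [MetricSpace X] [MeasurableSpace X]
    [BorelSpace X] {μ : Measure X} (h : MemP1 μ) :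
    ∃ u : ℕ → X, ∀ᵐ x ∂μ, x ∈ closure (Set.range u) := by
  have := h.1
  obtain ⟨C, hC, hμ⟩ := h.exists_isSigmaCompact
  obtain ⟨x, hx⟩ := hμ.exists
  obtain ⟨K, hK, rfl⟩ := hC
  obtain ⟨c, hc, hcK⟩ :=
    TopologicalSpace.IsSeparable.iUnion fun n => (hK n).isSeparable
  have hne : c.Nonempty := by
    rw [← closure_nonempty_iff]
    exact ⟨x, hcK hx⟩
  obtain ⟨u, rfl⟩ := hc.exists_eq_range hne
  exact ⟨u, hμ.mono fun y hy => hcK hy⟩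

/-- The distance is a.e. measurable for the product `σ`-algebra whenever the first marginal is
concentrated on a separable set. -/
lemma aemeasurable_edist_of_ae_mem_closure_range {X : Type*} [MetricSpace X] [MeasurableSpace X]
    [BorelSpace X] {γ : Measure (X × X)} {u : ℕ → X}
    (h : ∀ᵐ p ∂γ, p.1 ∈ closure (Set.range u)) :
    AEMeasurable (fun p : X × X => edist p.1 p.2) γ := by
  refine ⟨fun p => ⨅ n, (edist p.1 (u n) + edist (u n) p.2), ?_, ?_⟩
  · refine Measurable.iInf fun n => Measurable.add ?_ ?_
    · exact (measurable_edist_left (x := u n)).comp measurable_fst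
    · exact (measurable_edist_right (x := u n)).comp measurable_snd
  · filter_upwards [h] with p hp
    refine le_antisymm (le_iInf fun n => edist_triangle _ _ _) ?_
    refine ENNReal.le_of_forall_pos_le_add fun ε hε _ => ?_
    have hε2 : (0 : ℝ≥0∞) < ε / 2 := by simpa using hε.ne'
    obtain ⟨_, ⟨n, rfl⟩, hn⟩ := EMetric.mem_closure_iff.1 hp _ hε2
    calc (⨅ n, (edist p.1 (u n) + edist (u n) p.2))
        ≤ edist p.1 (u n) + edist (u n) p.2 := iInf_le _ n
      _ ≤ edist p.1 (u n) + (edist (u n) p.1 + edist p.1 p.2) := by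
          gcongr; exact edist_triangle _ _ _
      _ ≤ ε / 2 + (ε / 2 + edist p.1 p.2) := by
          rw [edist_comm (u n) p.1]; gcongr
      _ = edist p.1 p.2 + ε := by
          rw [← add_assoc, ENNReal.add_halves, add_comm]

lemma aemeasurable_edist_of_map_fst {X : Type*} [MetricSpace X] [MeasurableSpace X]
    [BorelSpace X] {γ : Measure (X × X)} (h : MemP1 (γ.map Prod.fst)) :
    AEMeasurable (fun p : X × X => edist p.1 p.2) γ := by
  obtain ⟨u, hu⟩ := h.exists_ae_mem_closure_range
  exact aemeasurable_edist_of_ae_mem_closure_range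
    (ae_of_ae_map measurable_fst.aemeasurable hu)

/-- Two finite measures with the same image under maps to `ℕ` can be coupled over `ℕ`. -/
lemma exists_coupling_over_nat {α β : Type*} [MeasurableSpace α] [MeasurableSpace β]
    {γ₁ : Measure α} {γ₂ : Measure β} [IsFiniteMeasure γ₁] [IsFiniteMeasure γ₂]
    {f : α → ℕ} {g : β → ℕ} (hf : Measurable f) (hg : Measurable g)
    (h : γ₁.map f = γ₂.map g) :
    ∃ Γ : Measure (α × β), Γ.map Prod.fst = γ₁ ∧ Γ.map Prod.snd = γ₂ ∧
      ∀ᵐ p ∂Γ, f p.1 = g p.2 := by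
  have hfm : ∀ n : ℕ, MeasurableSet (f ⁻¹' {n}) := fun n => hf (measurableSet_singleton n)
  have hgm : ∀ n : ℕ, MeasurableSet (g ⁻¹' {n}) := fun n => hg (measurableSet_singleton n)
  have hfg : ∀ n, γ₁ (f ⁻¹' {n}) = γ₂ (g ⁻¹' {n}) := fun n => by
    rw [← Measure.map_apply hf (measurableSet_singleton n), h,
      Measure.map_apply hg (measurableSet_singleton n)]
  let Γ : Measure (α × β) := Measure.sum fun n =>
    (γ₁ (f ⁻¹' {n}))⁻¹ • (γ₁.restrict (f ⁻¹' {n})).prod (γ₂.restrict (g ⁻¹' {n}))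
  refine ⟨Γ, ?_, ?_, ?_⟩
  · ext s hs
    have hn : ∀ n, (γ₁ (f ⁻¹' {n}))⁻¹ * (γ₁ (s ∩ f ⁻¹' {n}) * γ₂ (g ⁻¹' {n}))
        = γ₁ (s ∩ f ⁻¹' {n}) := fun n => by
      rw [← hfg]
      rcases eq_or_ne (γ₁ (f ⁻¹' {n})) 0 with h0 | h0
      · simp [h0, measure_mono_null Set.inter_subset_right h0]
      · rw [mul_comm (γ₁ _), ← mul_assoc, ENNReal.inv_mul_cancel h0 (measure_ne_top _ _), one_mul]
    rw [Measure.map_apply measurable_fst hs, Measure.sum_apply _ (measurable_fst hs),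
      ← Set.prod_univ]
    simp only [Measure.smul_apply, Measure.prod_prod, Measure.restrict_apply hs,
      Measure.restrict_apply_univ, smul_eq_mul, hn]
    rw [← measure_iUnion, ← Set.inter_iUnion, ← Set.preimage_iUnion, Set.iUnion_of_singleton,
      Set.preimage_univ, Set.inter_univ]
    · intro m n hmn
      refine Disjoint.mono Set.inter_subset_right Set.inter_subset_right ?_
      exact Disjoint.preimage _ (by simpa using hmn)
    · exact fun n => hs.inter (hfm n)
  · ext s hs
    have hn : ∀ n, (γ₁ (f ⁻¹' {n}))⁻¹ * (γ₁ (f ⁻¹' {n}) * γ₂ (s ∩ g ⁻¹' {n}))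
        = γ₂ (s ∩ g ⁻¹' {n}) := fun n => by
      rcases eq_or_ne (γ₁ (f ⁻¹' {n})) 0 with h0 | h0
      · simp [h0, measure_mono_null Set.inter_subset_right ((hfg n).symm.trans h0)]
      · rw [← mul_assoc, ENNReal.inv_mul_cancel h0 (measure_ne_top _ _), one_mul]
    rw [Measure.map_apply measurable_snd hs, Measure.sum_apply _ (measurable_snd hs),
      ← Set.univ_prod]
    simp only [Measure.smul_apply, Measure.prod_prod, Measure.restrict_apply hs,
      Measure.restrict_apply_univ, smul_eq_mul, hn]
    rw [← measure_iUnion, ← Set.inter_iUnion, ← Set.preimage_iUnion, Set.iUnion_of_singleton,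
      Set.preimage_univ, Set.inter_univ]
    · intro m n hmn
      refine Disjoint.mono Set.inter_subset_right Set.inter_subset_right ?_
      exact Disjoint.preimage _ (by simpa using hmn)
    · exact fun n => hs.inter (hgm n)
  · rw [Measure.ae_sum_iff]
    intro n
    refine Measure.ae_smul_measure ?_ _
    rw [Measure.prod_restrict]
    filter_upwards [ae_restrict_mem ((hfm n).prod (hgm n))] with p hp
    exact hp.1.trans hp.2.symm

lemma W1_le_lintegral {X : Type*} [MetricSpace X] [MeasurableSpace X] {γ : Measure (X × X)}
    (h : IsProbabilityMeasure γ) :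
    W1 (γ.map Prod.fst) (γ.map Prod.snd) ≤ ∫⁻ p, edist p.1 p.2 ∂γ :=
  iInf₂_le γ ⟨h, rfl, rfl⟩

/-- The cost of the image of a probability measure under a pair of maps bounds the Wasserstein
distance of its two images. -/
lemma W1_map_le_lintegral {α X : Type*} [MeasurableSpace α] [MetricSpace X] [MeasurableSpace X]
    (Γ : Measure α) [IsProbabilityMeasure Γ] {f g : α → X} (hf : Measurable f)
    (hg : Measurable g) : W1 (Γ.map f) (Γ.map g) ≤ ∫⁻ a, edist (f a) (g a) ∂Γ := by
  have hfg := hf.prodMk hg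
  have h := W1_le_lintegral (Measure.isProbabilityMeasure_map (μ := Γ) hfg.aemeasurable)
  rw [Measure.map_map measurable_fst hfg, Measure.map_map measurable_snd hfg] at h
  exact h.trans (lintegral_map_le _ _)

lemma W1_comm_le {X : Type*} [MetricSpace X] [MeasurableSpace X] (μ ν : Measure X) :
    W1 μ ν ≤ W1 ν μ := by
  refine le_iInf₂ fun γ hγ => ?_
  obtain ⟨hp, rfl, rfl⟩ := hγ
  simpa only [edist_comm] using W1_map_le_lintegral γ measurable_snd measurable_fst

lemma W1_self {X : Type*} [MetricSpace X] [MeasurableSpace X] {μ : Measure X}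
    (h : MemP1 μ) : W1 μ μ = 0 := by
  have := h.1
  simpa using W1_map_le_lintegral μ measurable_id measurable_id

lemma W1_dirac_le {X : Type*} [MetricSpace X] [MeasurableSpace X] (x y : X) :
    W1 (Measure.dirac x) (Measure.dirac y) ≤ edist x y := by
  simpa [Measure.map_const] using
    W1_map_le_lintegral (Measure.dirac x) (measurable_const (a := x)) (measurable_const (a := y))

lemma W1_ne_top {X : Type*} [MetricSpace X] [MeasurableSpace X] [BorelSpace X]
    {μ ν : Measure X} (hμ : MemP1 μ) (hν : MemP1 ν) : W1 μ ν ≠ ⊤ := by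
  have := hμ.1
  have := hν.1
  obtain ⟨x⟩ := μ.nonempty_of_neZero
  have h := W1_map_le_lintegral (μ.prod ν) measurable_fst measurable_snd
  rw [Measure.map_fst_prod, Measure.map_snd_prod] at h
  simp only [measure_univ, one_smul] at h
  refine ne_top_of_le_ne_top ?_ h
  have hm : Measurable fun y : X => edist y x := measurable_edist_left
  refine ne_top_of_le_ne_top ?_ (lintegral_mono fun p : X × X =>
    (edist_triangle p.1 x p.2).trans_eq (congrArg (edist p.1 x + ·) (edist_comm x p.2)))
  have hm₁ : Measurable fun p : X × X => edist p.1 x := hm.comp measurable_fst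
  rw [lintegral_add_left hm₁]
  refine ENNReal.add_ne_top.2 ⟨?_, ?_⟩
  · rw [← lintegral_map (f := fun y => edist y x) hm measurable_fst, Measure.map_fst_prod]
    simpa using hμ.2.2 x
  · rw [← lintegral_map (f := fun y => edist y x) hm measurable_snd, Measure.map_snd_prod]
    simpa using hν.2.2 x

/-- A separably supported measure admits a countable measurable partition into sets that are
small up to a null set. -/
lemma exists_measurable_nat_edist_lt {X : Type*} [MetricSpace X] [MeasurableSpace X]
    [BorelSpace X] {ρ : Measure X} {u : ℕ → X} (hu : ∀ᵐ x ∂ρ, x ∈ closure (Set.range u))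
    {ε : ℝ≥0∞} (hε : 0 < ε) :
    ∃ i : X → ℕ, Measurable i ∧ ∀ᵐ x ∂ρ, edist x (u (i x)) < ε := by
  classical
  have hm : ∀ n, MeasurableSet {x | edist x (u n) < ε} := fun n =>
    measurableSet_lt measurable_edist_left measurable_const
  have hex : ∀ x, ∃ n, edist x (u n) < ε ∨ ∀ m, ¬ edist x (u m) < ε := fun x => by
    by_cases h : ∃ n, edist x (u n) < ε
    · exact h.imp fun n hn => Or.inl hn
    · exact ⟨0, Or.inr (not_exists.1 h)⟩
  refine ⟨fun x => Nat.find (hex x), measurable_find hex fun n => ?_, ?_⟩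
  · exact (hm n).union (by
      change MeasurableSet {x | ∀ m, ¬ edist x (u m) < ε}
      rw [Set.ofPred_forall]
      exact MeasurableSet.iInter fun m => (hm m).compl)
  · filter_upwards [hu] with x hx
    obtain ⟨_, ⟨n, rfl⟩, hn⟩ := EMetric.mem_closure_iff.1 hx ε hε
    exact (Nat.find_spec (hex x)).resolve_right fun h => h n hn

lemma W1_triangle {X : Type*} [MetricSpace X] [MeasurableSpace X] [BorelSpace X]
    {μ ρ ν : Measure X} (hμ : MemP1 μ) (hρ : MemP1 ρ) :
    W1 μ ν ≤ W1 μ ρ + W1 ρ ν := by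
  refine ENNReal.le_iInf₂_add_iInf₂ fun γ₁ h₁ γ₂ h₂ => ?_
  obtain ⟨hp₁, rfl, h₁⟩ := h₁
  obtain ⟨hp₂, h₂, rfl⟩ := h₂
  obtain ⟨u, hu⟩ := hρ.exists_ae_mem_closure_range
  refine ENNReal.le_of_forall_pos_le_add fun ε hε _ => ?_
  have hε2 : (0 : ℝ≥0∞) < ε / 2 := by simpa using hε.ne'
  obtain ⟨i, hi, hiu⟩ := exists_measurable_nat_edist_lt hu hε2
  obtain ⟨Γ, hΓ₁, hΓ₂, hΓ⟩ := exists_coupling_over_nat (γ₁ := γ₁) (γ₂ := γ₂)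
    (hi.comp measurable_snd) (hi.comp measurable_fst)
    (by rw [← Measure.map_map hi measurable_snd, ← Measure.map_map hi measurable_fst, h₁, h₂])
  have hΓp : IsProbabilityMeasure Γ := ⟨by
    rw [← Set.preimage_univ (f := Prod.fst), ← Measure.map_apply measurable_fst .univ, hΓ₁,
      measure_univ]⟩
  have ha₁ : ∀ᵐ p ∂Γ, edist p.1.2 (u (i p.1.2)) < ε / 2 := by
    rw [← h₁, ← hΓ₁] at hiu
    exact ae_of_ae_map measurable_fst.aemeasurable
      (ae_of_ae_map measurable_snd.aemeasurable hiu)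
  have ha₂ : ∀ᵐ p ∂Γ, edist p.2.1 (u (i p.2.1)) < ε / 2 := by
    rw [← h₂, ← hΓ₂] at hiu
    exact ae_of_ae_map measurable_snd.aemeasurable
      (ae_of_ae_map measurable_fst.aemeasurable hiu)
  have hm₁ : AEMeasurable (fun p : X × X => edist p.1 p.2) (Γ.map Prod.fst) :=
    hΓ₁ ▸ aemeasurable_edist_of_map_fst hμ
  have hm₂ : AEMeasurable (fun p : X × X => edist p.1 p.2) (Γ.map Prod.snd) :=
    hΓ₂ ▸ aemeasurable_edist_of_map_fst (h₂ ▸ hρ)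
  have hcost := W1_map_le_lintegral Γ (measurable_fst.comp measurable_fst)
    (measurable_snd.comp measurable_snd)
  rw [← Measure.map_map measurable_fst measurable_fst, hΓ₁,
    ← Measure.map_map measurable_snd measurable_snd, hΓ₂] at hcost
  calc W1 (γ₁.map Prod.fst) (γ₂.map Prod.snd)
      ≤ ∫⁻ p, edist p.1.1 p.2.2 ∂Γ := hcost
    _ ≤ ∫⁻ p, (edist p.1.1 p.1.2 + (edist p.2.1 p.2.2 + ε)) ∂Γ := by
        refine lintegral_mono_ae ?_
        filter_upwards [ha₁, ha₂, hΓ] with p hp₁ hp₂ hp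
        simp only [Function.comp_apply] at hp
        have hmid : edist p.1.2 p.2.1 ≤ ε := by
          calc edist p.1.2 p.2.1
              ≤ edist p.1.2 (u (i p.1.2)) + edist p.2.1 (u (i p.1.2)) := edist_triangle_right _ _ _
            _ ≤ ε / 2 + ε / 2 := by
                rw [← hp] at hp₂
                gcongr
            _ = ε := ENNReal.add_halves _
        calc edist p.1.1 p.2.2
            ≤ edist p.1.1 p.1.2 + edist p.1.2 p.2.1 + edist p.2.1 p.2.2 := edist_triangle4 _ _ _ _
          _ ≤ edist p.1.1 p.1.2 + ε + edist p.2.1 p.2.2 := by gcongr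
          _ = _ := by rw [add_assoc, add_comm (ε : ℝ≥0∞)]
    _ = ∫⁻ p, edist p.1 p.2 ∂γ₁ + ∫⁻ p, edist p.1 p.2 ∂γ₂ + ε := by
        have hc₁ : AEMeasurable (fun p : (X × X) × X × X => edist p.1.1 p.1.2) Γ :=
          hm₁.comp_measurable measurable_fst
        have hc₂ : AEMeasurable (fun p : (X × X) × X × X => edist p.2.1 p.2.2) Γ :=
          hm₂.comp_measurable measurable_snd
        rw [lintegral_add_left' hc₁, lintegral_add_left' hc₂, ← add_assoc]
        congr 2
        · rw [← hΓ₁, lintegral_map' hm₁ measurable_fst.aemeasurable]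
        · rw [← hΓ₂, lintegral_map' hm₂ measurable_snd.aemeasurable]
        · simp

/-- `P₁(X)` as a pseudometric space with the first Wasserstein distance. -/
noncomputable abbrev P1.pseudoMetricSpace (X : Type*) [MetricSpace X] [MeasurableSpace X]
    [BorelSpace X] : PseudoMetricSpace (P1 X) :=
  letI : PseudoEMetricSpace (P1 X) :=
    { edist := fun μ ν => W1 μ.1 ν.1
      edist_self := fun μ => W1_self μ.2
      edist_comm := fun μ ν => le_antisymm (W1_comm_le _ _) (W1_comm_le _ _)
      edist_triangle := fun μ ρ _ => W1_triangle μ.2 ρ.2 }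
  PseudoEMetricSpace.toPseudoMetricSpace fun μ ν => W1_ne_top μ.2 ν.2

/-- A measurable left inverse, almost everywhere, of an isometric embedding. -/
lemma exists_measurable_leftInverse_on {X E : Type*} [MetricSpace X] [MeasurableSpace X]
    [BorelSpace X] [MetricSpace E] [MeasurableSpace E] [BorelSpace E] {e : X → E}
    (he : Isometry e) {C : Set X} (hC : IsSigmaCompact C) (hne : C.Nonempty) :
    ∃ r : E → X, Measurable r ∧ ∀ x ∈ C, r (e x) = x := by
  have hrange : MeasurableSet (Set.range (C.domRestrict e)) := by
    rw [Set.range_domRestrict]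
    obtain ⟨K, hK, rfl⟩ := hC
    rw [Set.image_iUnion]
    exact MeasurableSet.iUnion fun n => ((hK n).image he.continuous).measurableSet
  have hemb : MeasurableEmbedding (C.domRestrict e) :=
    (he.isEmbedding.comp Topology.IsEmbedding.subtypeVal).measurableEmbedding hrange
  obtain ⟨r, hr, hre⟩ := hemb.exists_measurable_extend (g := Subtype.val)
    measurable_subtype_coe fun _ => ⟨hne.some⟩
  exact ⟨r, hr, fun x hx => congrFun hre ⟨x, hx⟩⟩

/-- Pushing forward along an isometric embedding does not decrease the Wasserstein distance. -/
lemma W1_le_W1_map {X E : Type*} [MetricSpace X] [MeasurableSpace X]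
    [BorelSpace X] [MetricSpace E] [MeasurableSpace E] [BorelSpace E] {e : X → E}
    (he : Isometry e) {μ ν : Measure X} (hμ : MemP1 μ) (hν : MemP1 ν) :
    W1 μ ν ≤ W1 (μ.map e) (ν.map e) := by
  have := hμ.1
  have hem : Measurable e := he.continuous.measurable
  obtain ⟨C, hC, hμC⟩ := hμ.exists_isSigmaCompact
  obtain ⟨D, hD, hνD⟩ := hν.exists_isSigmaCompact
  obtain ⟨x₀, hx₀⟩ := hμC.exists
  have hCD : IsSigmaCompact (C ∪ D) := by
    rw [Set.union_eq_iUnion]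
    exact isSigmaCompact_iUnion _ fun b => by cases b <;> assumption
  obtain ⟨r, hr, hre⟩ := exists_measurable_leftInverse_on he hCD ⟨x₀, Or.inl hx₀⟩
  refine le_iInf₂ fun γ hγ => ?_
  obtain ⟨hp, h₁, h₂⟩ := hγ
  have hmem : ∀ {κ : Measure X}, (∀ᵐ x ∂κ, x ∈ C ∪ D) →
      (κ.map e).map r = κ ∧ ∀ᵐ y ∂κ.map e, e (r y) = y := by
    intro κ hκ
    constructor
    · rw [Measure.map_map hr hem]
      have : r ∘ e =ᵐ[κ] id := hκ.mono hre
      rw [Measure.map_congr this, Measure.map_id]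
    · have hCDm : MeasurableSet (e '' (C ∪ D)) := by
        obtain ⟨K, hK, hKe⟩ := hCD.image he.continuous
        rw [← hKe]
        exact MeasurableSet.iUnion fun n => (hK n).measurableSet
      have h : ∀ᵐ y ∂κ.map e, y ∈ e '' (C ∪ D) :=
        (ae_map_iff hem.aemeasurable hCDm).2 (hκ.mono fun x hx => Set.mem_image_of_mem e hx)
      filter_upwards [h] with y hy
      obtain ⟨x, hx, rfl⟩ := hy
      rw [hre x hx]
  have hμr := hmem (hμC.mono fun x => Or.inl)
  have hνr := hmem (hνD.mono fun x => Or.inr)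
  have hcost := W1_map_le_lintegral γ (hr.comp measurable_fst) (hr.comp measurable_snd)
  rw [← Measure.map_map hr measurable_fst, h₁, hμr.1, ← Measure.map_map hr measurable_snd, h₂,
    hνr.1] at hcost
  refine hcost.trans (lintegral_mono_ae ?_)
  filter_upwards [ae_of_ae_map measurable_fst.aemeasurable (h₁ ▸ hμr.2),
    ae_of_ae_map measurable_snd.aemeasurable (h₂ ▸ hνr.2)] with p hp₁ hp₂
  rw [← he.edist_eq, Function.comp_apply, Function.comp_apply, hp₁, hp₂]

lemma memP1_dirac {X : Type*} [MetricSpace X] [MeasurableSpace X] [BorelSpace X] (x : X) :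
    MemP1 (Measure.dirac x) := by
  refine ⟨inferInstance, ⟨fun s hs r hr => ?_⟩, fun x₀ => ?_⟩
  · have hx : x ∈ s := by
      by_contra hx
      simp [Measure.dirac_apply' x hs, hx] at hr
    refine ⟨{x}, by simpa using hx, isCompact_singleton, ?_⟩
    simpa [Measure.dirac_apply' x hs, hx] using hr
  · rw [lintegral_dirac]
    exact edist_ne_top _ _

/-- Points of an injective hull are determined by their distances to the embedded space. -/
lemma IsInjectiveHull.eq_of_dist_eq {X E : Type u} [MetricSpace X] [MetricSpace E] {e : X → E}
    (he : IsInjectiveHull e) {y y' : E} (h : ∀ x, dist y (e x) = dist y' (e x)) : y = y' := by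
  let F : E → BoundedContinuousFunction X ℝ := fun z =>
    BoundedContinuousFunction.ofNormedAddCommGroup (fun x => dist z (e x) - dist y (e x))
      ((continuous_const.dist he.1.continuous).sub (continuous_const.dist he.1.continuous))
      (dist z y) fun x => abs_dist_sub_le _ _ _
  have hF : ∀ z x, F z x = dist z (e x) - dist y (e x) := fun _ _ => rfl
  have hLip : LipschitzWith 1 F := LipschitzWith.of_dist_le_mul fun z w => by
    rw [NNReal.coe_one, one_mul, BoundedContinuousFunction.dist_le dist_nonneg]
    intro x
    rw [hF, hF, Real.dist_eq, sub_sub_sub_cancel_right]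
    exact abs_dist_sub_le _ _ _
  have hiso : Isometry (F ∘ e) := Isometry.of_dist_eq fun x x' => by
    refine le_antisymm ?_ ?_
    · exact (hLip.dist_le_mul _ _).trans_eq (by rw [NNReal.coe_one, one_mul, he.1.dist_eq])
    · refine le_trans ?_ (BoundedContinuousFunction.dist_coe_le_dist x')
      rw [Function.comp_apply, Function.comp_apply, hF, hF, Real.dist_eq,
        sub_sub_sub_cancel_right, dist_self, sub_zero, he.1.dist_eq, abs_of_nonneg dist_nonneg]
  refine (he.2.2 _ F hLip hiso).injective ?_
  ext x
  rw [hF, hF, h]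

/-- An injective hull is rigid: a `1`-Lipschitz self-map fixing the embedded space is the
identity. -/
lemma IsInjectiveHull.eq_self_of_comp_eq {X E : Type u} [MetricSpace X] [MetricSpace E]
    {e : X → E} (he : IsInjectiveHull e) {φ : E → E} (hφ : LipschitzWith 1 φ)
    (hfix : ∀ x, φ (e x) = e x) (y : E) : φ y = y := by
  have hcomp : φ ∘ e = e := funext hfix
  have hiso : Isometry φ := he.2.2 E φ hφ (by rw [hcomp]; exact he.1)
  refine he.eq_of_dist_eq fun x => ?_
  rw [← hiso.dist_eq y (e x), hfix]

/-- **Lemma 3.2.** Let `e : X → E` be an injective hull of `X` and let `S ⊆ P₁(X)` contain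
all Dirac measures. If `β` is `1`-Lipschitz on `S` (w.r.t. `W₁`) with `β δ_x = x`, then
there exists a contracting barycenter map `β̄ : P₁(E) → E` with `β̄ (e_♯ s) = e (β s)` for
all `s ∈ S`. -/
theorem barycenter_extends_to_injective_hull
    {X E : Type u} [MetricSpace X] [MeasurableSpace X] [BorelSpace X]
    [MetricSpace E] [MeasurableSpace E] [BorelSpace E]
    (e : X → E) (he : IsInjectiveHull e)
    (S : Set (P1 X))
    (hS : ∀ x : X, ∀ μ : P1 X, μ.1 = Measure.dirac x → μ ∈ S)
    (β : P1 X → X)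
    (hβLip : ∀ μ ∈ S, ∀ ν ∈ S, edist (β μ) (β ν) ≤ W1 μ.1 ν.1)
    (hβdirac : ∀ x : X, ∀ μ ∈ S, μ.1 = Measure.dirac x → β μ = x) :
    ∃ βbar : P1 E → E, IsContractingBarycenter βbar ∧
      ∀ μ ∈ S, ∀ ν : P1 E, ν.1 = (μ : Measure X).map e → βbar ν = e (β μ) := by
  let _ : PseudoMetricSpace (P1 E) := P1.pseudoMetricSpace E
  have hedist : ∀ μ ν : P1 E, edist μ ν = W1 μ.1 ν.1 := fun _ _ => rfl
  have hcompare : ∀ μ ∈ S, ∀ μ' ∈ S, ∀ ν ν' : P1 E, ν.1 = μ.1.map e → ν'.1 = μ'.1.map e →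
      edist (e (β μ)) (e (β μ')) ≤ edist ν ν' := by
    intro μ hμ μ' hμ' ν ν' hν hν'
    rw [he.1.edist_eq, hedist, hν, hν']
    exact (hβLip μ hμ μ' hμ').trans (W1_le_W1_map he.1 μ.2 μ'.2)
  let A : Set (SeparationQuotient (P1 E)) :=
    {a | ∃ μ ∈ S, ∃ ν : P1 E, ν.1 = μ.1.map e ∧ SeparationQuotient.mk ν = a}
  choose s hsS t ht hta using fun a : A => a.2
  obtain ⟨g, hg, hgA⟩ := he.2.1 (SeparationQuotient (P1 E)) A (fun a => e (β (s a)))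
    fun a b => by
      rw [ENNReal.coe_one, one_mul, Subtype.edist_eq, ← hta a, ← hta b,
        SeparationQuotient.edist_mk]
      exact hcompare _ (hsS a) _ (hsS b) _ _ (ht a) (ht b)
  have hLip : ∀ μ ν : P1 E, edist (g (SeparationQuotient.mk μ)) (g (SeparationQuotient.mk ν))
      ≤ W1 μ.1 ν.1 := fun μ ν => by
    simpa [SeparationQuotient.edist_mk, hedist] using
      hg (SeparationQuotient.mk μ) (SeparationQuotient.mk ν)
  have hext : ∀ μ ∈ S, ∀ ν : P1 E, ν.1 = (μ : Measure X).map e →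
      g (SeparationQuotient.mk ν) = e (β μ) := by
    intro μ hμ ν hν
    let a : A := ⟨SeparationQuotient.mk ν, μ, hμ, ν, hν, rfl⟩
    refine (hgA a).trans (edist_le_zero.1 ?_)
    refine (hcompare _ (hsS a) μ hμ (t a) ν (ht a) hν).trans_eq ?_
    rw [← SeparationQuotient.edist_mk, hta a, edist_self]
  refine ⟨fun μ => g (SeparationQuotient.mk μ), ⟨hLip, fun y μ hμ => ?_⟩, hext⟩
  let φ : E → E := fun z => g (SeparationQuotient.mk ⟨Measure.dirac z, memP1_dirac z⟩)
  have hφ : LipschitzWith 1 φ := fun z w => by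
    rw [ENNReal.coe_one, one_mul]
    exact (hLip _ _).trans (W1_dirac_le z w)
  have hfix : ∀ x, φ (e x) = e x := fun x => by
    have hx : (⟨Measure.dirac x, memP1_dirac x⟩ : P1 X) ∈ S := hS x _ rfl
    refine (hext _ hx _ ?_).trans (congrArg e (hβdirac x _ hx rfl))
    exact (Measure.map_dirac' he.1.continuous.measurable x).symm
  obtain rfl : μ = ⟨Measure.dirac y, memP1_dirac y⟩ := Subtype.ext hμ
  exact he.eq_self_of_comp_eq hφ hfix y
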